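/- Let Ω be a non-empty closed discrete subset of ℂ and let H : [0,1] × J → ℂ be a symmetric Ω-homotopy (J a compact interval). Then there exists δ > 0 such that for every Ω-continuable germ φ̂ ∈ R̂_Ω and every (s,t) ∈ [0,1] × J, the holomorphic germ cont_{H_{t|s}} φ̂ at the point H_t(s), obtained by analytic continuation of φ̂ along the truncated path H_{t|s} := (H_t)|_{[0,s]}, has radius of convergence at least δ. -/

import Mathlib

open Set Metric Filter Topology intervalIntegral

noncomputable section

/-- A path `γ : [a,b] → ℂ` which is piecewise `C¹`. -/
def PiecewiseC1On (γ : ℝ → ℂ) (a b : ℝ) : Prop :=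
  ContinuousOn γ (Set.Icc a b) ∧
  ∃ (n : ℕ) (u : ℕ → ℝ), u 0 = a ∧ u n = b ∧ (∀ i < n, u i ≤ u (i + 1)) ∧
    ∀ i < n, ContDiffOn ℝ 1 γ (Set.Icc (u i) (u (i + 1)))

/-- The germ at `γ a` of the function `f` admits analytic continuation along
`γ` restricted to `[a,b]`, resulting in the germ of `g` at `γ b`.  This is the
usual definition via a family of analytic elements `(F t, r t)` along the path
which are locally compatible. -/
def ContAlong (f : ℂ → ℂ) (γ : ℝ → ℂ) (a b : ℝ) (g : ℂ → ℂ) : Prop :=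
  ∃ (F : ℝ → ℂ → ℂ) (r : ℝ → ℝ),
    (∀ t ∈ Set.Icc a b, 0 < r t ∧ AnalyticOnNhd ℂ (F t) (Metric.ball (γ t) (r t))) ∧
    (∀ t ∈ Set.Icc a b, ∃ ε > 0, ∀ t' ∈ Set.Icc a b, |t' - t| < ε →
      Set.EqOn (F t) (F t') (Metric.ball (γ t) (r t) ∩ Metric.ball (γ t') (r t'))) ∧
    (∀ᶠ z in 𝓝 (γ a), F a z = f z) ∧
    (∀ᶠ z in 𝓝 (γ b), F b z = g z)

/-- The germ of `f` at `γ a` admits analytic continuation along `γ|[a,b]`. -/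
def ContinuableAlong (f : ℂ → ℂ) (γ : ℝ → ℂ) (a b : ℝ) : Prop :=
  ∃ g, ContAlong f γ a b g

/-- `f` is an `Ω`-continuable holomorphic germ at `0`: it is holomorphic on some
disc `D_R` with `D_R∖{0}` disjoint from `Ω`, and admits analytic continuation
along every (piecewise `C¹`) path of `ℂ∖Ω` originating from any point of `D_R∖{0}`. -/
def OmegaCont (Ω : Set ℂ) (f : ℂ → ℂ) : Prop :=
  ∃ R > 0, AnalyticOnNhd ℂ f (Metric.ball 0 R) ∧
    (∀ ζ ∈ Metric.ball (0:ℂ) R, ζ ≠ 0 → ζ ∉ Ω) ∧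
    ∀ γ : ℝ → ℂ, PiecewiseC1On γ 0 1 → γ 0 ∈ Metric.ball (0:ℂ) R → γ 0 ≠ 0 →
      (∀ t ∈ Set.Icc (0:ℝ) 1, γ t ∉ Ω) → ContinuableAlong f γ 0 1

/-- Convolution of two germs: `(f ⋆ g)(ζ) = ∫₀^ζ f(ξ) g(ζ-ξ) dξ`, the integral
being taken over the line segment from `0` to `ζ`. -/
def conv (f g : ℂ → ℂ) (ζ : ℂ) : ℂ :=
  ζ * ∫ t in (0:ℝ)..1, f ((t : ℂ) * ζ) * g ((1 - (t : ℂ)) * ζ)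

/-- A symmetric `Ω`-homotopy on `[0,1] × [a,b]`: a continuous map such that each
path `H_t = H ( · , t)` is piecewise `C¹`, starts at `0`, avoids `Ω` on `(0,1]`,
and is symmetric with respect to its midpoint: `H_t(1) - H_t(s) = H_t(1-s)`. -/
def SymmOmegaHomotopy (Ω : Set ℂ) (H : ℝ → ℝ → ℂ) (a b : ℝ) : Prop :=
  ContinuousOn (fun p : ℝ × ℝ => H p.1 p.2) (Set.Icc 0 1 ×ˢ Set.Icc a b) ∧
  ∀ t ∈ Set.Icc a b,
    PiecewiseC1On (fun s => H s t) 0 1 ∧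
    H 0 t = 0 ∧
    (∀ s ∈ Set.Ioc (0:ℝ) 1, H s t ∉ Ω) ∧
    (∀ s ∈ Set.Icc (0:ℝ) 1, H 1 t - H s t = H (1 - s) t)

/-!
The germs of analytic functions form a space over `ℂ` (the étalé space), and continuing a germ along
a path means lifting the path to that space. Its projection is a separated local homeomorphism, so
lifts are unique, and lifts of the segments from `c` to the points of an open set `U` depend
continuously on the endpoint: a germ at `c` which can be continued along all these segments is the
germ of a single analytic function on `U`.

Let `f` be `Ω`-continuable and let `γ` be a path from `0` that avoids `Ω` after its start.
Continuing `f` along `γ` followed by segments, one sees that the germ obtained at the end of `γ`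
extends to every disc around the endpoint that meets `Ω` at most at its centre. For the paths `H_t`
restricted to `[0, s]` the radius of this disc is bounded below by compactness, as long as
`s ≥ d > 0`. For `s < d` with `d` small, the path stays in a disc `|ζ| < ρ / 2` such that `Ω`
contains no `ζ` with `0 < |ζ| < ρ`. The germ `f` extends to `|ζ| < ρ`, so the continued germ
converges in a disc of radius `ρ / 2`.
-/

section AnalyticGerm

variable (𝕜 V E : Type*) [NontriviallyNormedField 𝕜] [NormedAddCommGroup V] [NormedSpace 𝕜 V]
  [NormedAddCommGroup E] [NormedSpace 𝕜 E]

/-- Equality of germs, for pairs of a point and a function analytic at that point. -/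
def analyticGermSetoid : Setoid {p : V × (V → E) // AnalyticAt 𝕜 p.2 p.1} where
  r p q := p.1.1 = q.1.1 ∧ p.1.2 =ᶠ[𝓝 p.1.1] q.1.2
  iseqv :=
    { refl _ := ⟨rfl, .rfl⟩
      symm h := ⟨h.1.symm, h.1 ▸ h.2.symm⟩
      trans h h' := ⟨h.1.trans h'.1, h.2.trans (h.1 ▸ h'.2)⟩ }

/-- The étalé space of the sheaf of `E`-valued analytic functions on `V`: its elements are the germs
of analytic functions at the points of `V`. Analytic continuation along a path is lifting of that
path to this space. -/
def AnalyticGerm : Type _ := Quotient (analyticGermSetoid 𝕜 V E)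

namespace AnalyticGerm

variable {𝕜 V E}

/-- The point of `V` at which a germ is taken; this is the projection of the étalé space. -/
def point : AnalyticGerm 𝕜 V E → V := Quotient.lift (fun p => p.1.1) fun _ _ h => h.1

/-- The germ of `f` at `z`. -/
def mk (f : V → E) (z : V) (hf : AnalyticAt 𝕜 f z) : AnalyticGerm 𝕜 V E :=
  Quotient.mk _ ⟨(z, f), hf⟩

theorem mk_eq_mk_iff {f g : V → E} {z : V} (hf : AnalyticAt 𝕜 f z) (hg : AnalyticAt 𝕜 g z) :
    mk f z hf = mk g z hg ↔ f =ᶠ[𝓝 z] g :=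
  Quotient.eq.trans (and_iff_right rfl)

variable (𝕜) in
open Classical in
/-- The germ of `f` at `z`, as a total function of `f` and `z`. If `f` is not analytic at `z`, it is
the germ of `0` at `z`, so that `germAt 𝕜 f` is always a section of `point`. -/
def germAt (f : V → E) (z : V) : AnalyticGerm 𝕜 V E :=
  if hf : AnalyticAt 𝕜 f z then mk f z hf else mk 0 z analyticAt_const

@[simp]
theorem point_germAt (f : V → E) (z : V) : (germAt 𝕜 f z).point = z := by
  unfold germAt
  split_ifs <;> rfl

theorem germAt_eq_germAt_iff {f g : V → E} {z : V} (hf : AnalyticAt 𝕜 f z)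
    (hg : AnalyticAt 𝕜 g z) : germAt 𝕜 f z = germAt 𝕜 g z ↔ f =ᶠ[𝓝 z] g := by
  rw [germAt, germAt, dif_pos hf, dif_pos hg, mk_eq_mk_iff]

theorem germAt_congr {f g : V → E} {z : V} (h : f =ᶠ[𝓝 z] g) : germAt 𝕜 f z = germAt 𝕜 g z := by
  by_cases hf : AnalyticAt 𝕜 f z
  · exact (germAt_eq_germAt_iff hf (hf.congr h)).2 h
  · rw [germAt, germAt, dif_neg hf, dif_neg (mt (fun hg => hg.congr h.symm) hf)]

theorem exists_germAt_eq (σ : AnalyticGerm 𝕜 V E) :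
    ∃ f, AnalyticAt 𝕜 f σ.point ∧ germAt 𝕜 f σ.point = σ := by
  obtain ⟨⟨⟨z, f⟩, hf⟩, rfl⟩ := Quotient.exists_rep σ
  exact ⟨f, hf, dif_pos hf⟩

/-- The finest topology for which `germAt 𝕜 f` is continuous at every point where `f` is
analytic. -/
instance : TopologicalSpace (AnalyticGerm 𝕜 V E) where
  IsOpen W := ∀ f z, AnalyticAt 𝕜 f z → germAt 𝕜 f z ∈ W → ∀ᶠ w in 𝓝 z, germAt 𝕜 f w ∈ W
  isOpen_univ _ _ _ _ := Eventually.of_forall fun _ => mem_univ _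
  isOpen_inter _ _ hW hW' f z hf hz := (hW f z hf hz.1).and (hW' f z hf hz.2)
  isOpen_sUnion _ h f z hf := fun ⟨W, hWS, hzW⟩ =>
    (h W hWS f z hf hzW).mono fun _ hw => ⟨W, hWS, hw⟩

theorem continuousAt_germAt {f : V → E} {z : V} (hf : AnalyticAt 𝕜 f z) :
    ContinuousAt (germAt 𝕜 f) z := by
  rw [ContinuousAt, _root_.tendsto_nhds]
  exact fun W hW hz => hW f z hf hz

theorem continuous_point : Continuous (point : AnalyticGerm 𝕜 V E → V) := by
  refine continuous_def.2 fun U hU f z _ hz => ?_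
  simp only [mem_preimage, point_germAt] at hz ⊢
  exact hU.mem_nhds hz

theorem isOpen_image_germAt {f : V → E} {U : Set V} (hU : IsOpen U) (hf : AnalyticOnNhd 𝕜 f U) :
    IsOpen (germAt 𝕜 f '' U) := by
  rintro g z hg ⟨w, hw, hwg⟩
  obtain rfl : w = z := by simpa using congrArg point hwg
  have hfg : f =ᶠ[𝓝 w] g := (germAt_eq_germAt_iff (hf w hw) hg).1 hwg
  filter_upwards [hfg.eventually_nhds, hU.mem_nhds hw] with x hx hxU
  exact ⟨x, hxU, germAt_congr hx⟩

section Complete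

variable [CompleteSpace E]

theorem eventually_germAt_point_eq {f : V → E} {z : V} (hf : AnalyticAt 𝕜 f z) :
    ∀ᶠ σ in 𝓝 (germAt 𝕜 f z), germAt 𝕜 f σ.point = σ := by
  filter_upwards [(isOpen_image_germAt (isOpen_analyticAt 𝕜 f) fun _ h => h).mem_nhds
    ⟨z, hf, rfl⟩]
  rintro _ ⟨w, -, rfl⟩
  rw [point_germAt]

theorem isLocalHomeomorph_point :
    IsLocalHomeomorph (point : AnalyticGerm 𝕜 V E → V) := by
  refine .mk _ fun σ => ?_
  obtain ⟨f, hf, hfσ⟩ := exists_germAt_eq σ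
  let U := {z | AnalyticAt 𝕜 f z}
  have hU : IsOpen U := isOpen_analyticAt 𝕜 f
  let e : OpenPartialHomeomorph (AnalyticGerm 𝕜 V E) V :=
    { toFun := point
      invFun := germAt 𝕜 f
      source := germAt 𝕜 f '' U
      target := U
      map_source' := by rintro _ ⟨z, hz, rfl⟩; rwa [point_germAt]
      map_target' := fun _ => mem_image_of_mem _
      left_inv' := by rintro _ ⟨z, -, rfl⟩; rw [point_germAt]
      right_inv' := fun _ _ => point_germAt _ _
      open_source := isOpen_image_germAt hU fun _ h => h
      open_target := hU
      continuousOn_toFun := continuous_point.continuousOn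
      continuousOn_invFun := fun _ hz => (continuousAt_germAt hz).continuousWithinAt }
  exact ⟨e, ⟨σ.point, hf, hfσ⟩, fun _ _ => rfl⟩

theorem isSeparatedMap_point [LocallyConnectedSpace V] :
    IsSeparatedMap (point : AnalyticGerm 𝕜 V E → V) := by
  intro σ τ hστ hne
  obtain ⟨f, hf, hfσ⟩ := exists_germAt_eq σ
  obtain ⟨g, hg, hgτ⟩ := exists_germAt_eq τ
  rw [← hστ] at hg hgτ
  obtain ⟨U, hU, hUo, hzU, hUc⟩ := locallyConnectedSpace_iff_subsets_isOpen_isConnected.1 ‹_›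
    σ.point _ (hf.eventually_analyticAt.and hg.eventually_analyticAt)
  have hfU : AnalyticOnNhd 𝕜 f U := fun z hz => (hU hz).1
  have hgU : AnalyticOnNhd 𝕜 g U := fun z hz => (hU hz).2
  refine ⟨germAt 𝕜 f '' U, germAt 𝕜 g '' U, isOpen_image_germAt hUo hfU,
    isOpen_image_germAt hUo hgU, ⟨_, hzU, hfσ⟩, ⟨_, hzU, hgτ⟩, ?_⟩
  rw [Set.disjoint_left]
  rintro _ ⟨w, hw, rfl⟩ ⟨w', -, hgf⟩
  obtain rfl : w' = w := by simpa using congrArg point hgf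
  have hfg : EqOn g f U := hgU.eqOn_of_preconnected_of_eventuallyEq hfU hUc.isPreconnected hw
    ((germAt_eq_germAt_iff (hgU _ hw) (hfU _ hw)).1 hgf)
  refine hne ?_
  rw [← hfσ, ← hgτ, germAt_congr (hfg.eventuallyEq_of_mem (hUo.mem_nhds hzU))]

theorem exists_analyticOnNhd_of_continuousOn {U : Set V} (hU : IsOpen U)
    {σ : V → AnalyticGerm 𝕜 V E} (hσ : ContinuousOn σ U) (hpt : ∀ z ∈ U, (σ z).point = z) :
    ∃ g : V → E, AnalyticOnNhd 𝕜 g U ∧ EqOn (germAt 𝕜 g) σ U := by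
  choose rep hrep hrep_eq using exists_germAt_eq (𝕜 := 𝕜) (V := V) (E := E)
  have hlocal : ∀ z ∈ U, rep (σ z) =ᶠ[𝓝 z] fun w => rep (σ w) w := by
    intro z hz
    have hana : AnalyticAt 𝕜 (rep (σ z)) z := by simpa only [hpt z hz] using hrep (σ z)
    have hgerm : germAt 𝕜 (rep (σ z)) z = σ z := by simpa only [hpt z hz] using hrep_eq (σ z)
    have hnear := (hσ.continuousAt (hU.mem_nhds hz)).eventually
      (hgerm ▸ eventually_germAt_point_eq hana)
    filter_upwards [hnear, hana.eventually_analyticAt, hU.mem_nhds hz] with w hw hwa hwU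
    rw [hpt w hwU] at hw
    have hana' : AnalyticAt 𝕜 (rep (σ w)) w := by simpa only [hpt w hwU] using hrep (σ w)
    have hgerm' : germAt 𝕜 (rep (σ w)) w = σ w := by simpa only [hpt w hwU] using hrep_eq (σ w)
    exact ((germAt_eq_germAt_iff hwa hana').1 (hw.trans hgerm'.symm)).eq_of_nhds
  refine ⟨fun w => rep (σ w) w, fun z hz => ?_, fun z hz => ?_⟩
  · simpa only [hpt z hz] using (hrep (σ z)).congr (by simpa only [hpt z hz] using hlocal z hz)
  · rw [← germAt_congr (hlocal z hz)]
    simpa only [hpt z hz] using hrep_eq (σ z)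

end Complete

section IsLiftOn

variable {X : Type*} [TopologicalSpace X]

/-- `L` lifts the map `γ` to germs of analytic functions over the set `s`. If `γ` is a path, then
`L` is the analytic continuation along `γ` of any of its values. -/
structure IsLiftOn (L : X → AnalyticGerm 𝕜 V E) (γ : X → V) (s : Set X) : Prop where
  continuousOn : ContinuousOn L s
  point_eq : EqOn (fun x => (L x).point) γ s

namespace IsLiftOn

variable {L M : X → AnalyticGerm 𝕜 V E} {γ γ' : X → V} {s t : Set X}

theorem mono (hL : IsLiftOn L γ s) (hts : t ⊆ s) : IsLiftOn L γ t :=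
  ⟨hL.continuousOn.mono hts, hL.point_eq.mono hts⟩

theorem congr_base (hL : IsLiftOn L γ s) (hγ : EqOn γ γ' s) : IsLiftOn L γ' s :=
  ⟨hL.continuousOn, hL.point_eq.trans hγ⟩

theorem comp {Y : Type*} [TopologicalSpace Y] {φ : Y → X} {t : Set Y} (hL : IsLiftOn L γ s)
    (hφ : ContinuousOn φ t) (hφs : MapsTo φ t s) : IsLiftOn (L ∘ φ) (γ ∘ φ) t :=
  ⟨hL.continuousOn.comp hφ hφs, hL.point_eq.comp_right hφs⟩

theorem exists_union (hL : IsLiftOn L γ s) (hM : IsLiftOn M γ t) (hs : IsClosed s)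
    (ht : IsClosed t) (hLM : EqOn L M (s ∩ t)) :
    ∃ N, IsLiftOn N γ (s ∪ t) ∧ EqOn N L s ∧ EqOn N M t := by
  classical
  have hNL : EqOn (s.piecewise L M) L s := piecewise_eqOn s L M
  have hNM : EqOn (s.piecewise L M) M t := fun x hx => by
    by_cases hxs : x ∈ s
    · exact (hNL hxs).trans (hLM ⟨hxs, hx⟩)
    · exact piecewise_eqOn_compl s L M hxs
  refine ⟨s.piecewise L M, ⟨?_, ?_⟩, hNL, hNM⟩
  · exact (hL.continuousOn.congr hNL).union_of_isClosed (hM.continuousOn.congr hNM) hs ht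
  · rintro x (hx | hx)
    · exact (congrArg point (hNL hx)).trans (hL.point_eq hx)
    · exact (congrArg point (hNM hx)).trans (hM.point_eq hx)

theorem exists_Icc_trans [LinearOrder X] [OrderClosedTopology X] {a b c : X}
    (hL : IsLiftOn L γ (Icc a b)) (hM : IsLiftOn M γ (Icc b c)) (hab : a ≤ b) (hbc : b ≤ c)
    (hLM : L b = M b) : ∃ N, IsLiftOn N γ (Icc a c) ∧ EqOn N L (Icc a b) ∧ EqOn N M (Icc b c) := by
  rw [← Icc_union_Icc_eq_Icc hab hbc]
  refine hL.exists_union hM isClosed_Icc isClosed_Icc fun x hx => ?_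
  rwa [le_antisymm hx.1.2 hx.2.1]

theorem eqOn_of_isPreconnected [CompleteSpace E] [LocallyConnectedSpace V] (hL : IsLiftOn L γ s)
    (hM : IsLiftOn M γ s) (hs : IsPreconnected s) {x : X} (hx : x ∈ s) (hLM : L x = M x) :
    EqOn L M s :=
  isSeparatedMap_point.eqOn_of_comp_eqOn isLocalHomeomorph_point.isLocallyInjective hs
    hL.continuousOn hM.continuousOn (hL.point_eq.trans hM.point_eq.symm) hx hLM

end IsLiftOn

theorem isLiftOn_germAt_comp {f : V → E} {γ : X → V} {s : Set X} (hγ : ContinuousOn γ s)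
    (hf : ∀ x ∈ s, AnalyticAt 𝕜 f (γ x)) : IsLiftOn (fun x => germAt 𝕜 f (γ x)) γ s :=
  ⟨fun x hx => (continuousAt_germAt (hf x hx)).comp_continuousWithinAt (hγ x hx),
    fun _ _ => point_germAt _ _⟩

/-- Monodromy: the germs at the ends of the continuations along segments from `c` depend
continuously on the endpoint, hence form an analytic function. -/
theorem exists_analyticOnNhd_of_forall_lineMap [NormedSpace ℝ V] [CompleteSpace E] {U : Set V}
    (hU : IsOpen U) {c : V} (hc : c ∈ U) {σ : AnalyticGerm 𝕜 V E} (hσ : σ.point = c)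
    (h : ∀ z ∈ U, z ≠ c → ∃ L : ℝ → AnalyticGerm 𝕜 V E,
      IsLiftOn L (AffineMap.lineMap c z) (Icc 0 1) ∧ L 0 = σ) :
    ∃ g : V → E, AnalyticOnNhd 𝕜 g U ∧ germAt 𝕜 g c = σ := by
  have hconst : IsLiftOn (fun _ : ℝ => σ) (AffineMap.lineMap c c) (Icc 0 1) :=
    ⟨continuousOn_const, fun t _ => by simp [hσ]⟩
  have hlift : ∀ z ∈ U, ∃ L : ℝ → AnalyticGerm 𝕜 V E,
      IsLiftOn L (AffineMap.lineMap c z) (Icc 0 1) ∧ L 0 = σ := fun z hz => by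
    rcases eq_or_ne z c with rfl | hzc
    · exact ⟨_, hconst, rfl⟩
    · exact h z hz hzc
  have : Nonempty (AnalyticGerm 𝕜 V E) := ⟨σ⟩
  choose! L hL hL0 using hlift
  have hcont : Continuous fun p : unitInterval × U => L p.2 p.1 :=
    isLocalHomeomorph_point.continuous_lift isSeparatedMap_point
      (f := ⟨fun p : unitInterval × U => AffineMap.lineMap c (p.2 : V) (p.1 : ℝ), by fun_prop⟩)
      (funext fun p => (hL p.2 p.2.2).point_eq p.1.2)
      (continuous_const.congr fun z : U => (hL0 z z.2).symm)
      fun z : U => (hL z z.2).continuousOn.domRestrict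
  have hend : ContinuousOn (fun z => L z 1) U :=
    continuousOn_iff_continuous_domRestrict.2 (hcont.comp (Continuous.prodMk_right 1))
  obtain ⟨g, hg, hgL⟩ := exists_analyticOnNhd_of_continuousOn hU hend
    fun z hz => ((hL z hz).point_eq (right_mem_Icc.2 zero_le_one)).trans (by simp)
  have hLc : EqOn (L c) (fun _ => σ) (Icc 0 1) := (hL c hc).eqOn_of_isPreconnected hconst
    isPreconnected_Icc (left_mem_Icc.2 zero_le_one) (hL0 c hc)
  exact ⟨g, hg, (hgL hc).trans (hLc (right_mem_Icc.2 zero_le_one))⟩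

end IsLiftOn

end AnalyticGerm

end AnalyticGerm

section PiecewiseC1On

variable {γ η : ℝ → ℂ} {a b c d : ℝ}

theorem PiecewiseC1On.exists_monotone (h : PiecewiseC1On γ a b) :
    ∃ (n : ℕ) (u : ℕ → ℝ), Monotone u ∧ u 0 = a ∧ u n = b ∧
      ∀ i < n, ContDiffOn ℝ 1 γ (Icc (u i) (u (i + 1))) := by
  obtain ⟨-, n, u, h0, hn, hu, hd⟩ := h
  refine ⟨n, fun i => u (min i n), monotone_nat_of_le_succ fun i => ?_, by simpa, by simpa,
    fun i hi => ?_⟩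
  · rcases lt_or_ge i n with hi | hi
    · simpa only [min_eq_left hi.le, min_eq_left (Nat.succ_le_of_lt hi)] using hu i hi
    · simp only [min_eq_right hi, min_eq_right (hi.trans i.le_succ), le_rfl]
  · simpa only [min_eq_left hi.le, min_eq_left (Nat.succ_le_of_lt hi)] using hd i hi

theorem PiecewiseC1On.le (h : PiecewiseC1On γ a b) : a ≤ b := by
  obtain ⟨n, u, hu, rfl, rfl, -⟩ := h.exists_monotone
  exact hu n.zero_le

theorem piecewiseC1On_of_contDiffOn (hab : a ≤ b) (h : ContDiffOn ℝ 1 γ (Icc a b)) :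
    PiecewiseC1On γ a b :=
  ⟨h.continuousOn, 1, fun i => if i = 0 then a else b, by simp, by simp, by simpa, by simpa⟩

theorem PiecewiseC1On.congr (h : PiecewiseC1On γ a b) (hη : EqOn η γ (Icc a b)) :
    PiecewiseC1On η a b := by
  obtain ⟨n, u, hu, h0, hn, hd⟩ := h.exists_monotone
  refine ⟨h.1.congr hη, n, u, h0, hn, fun i _ => hu i.le_succ, fun i hi => ?_⟩
  exact (hd i hi).congr <| hη.mono <|
    Icc_subset_Icc (h0.symm.trans_le (hu i.zero_le)) ((hu (Nat.succ_le_of_lt hi)).trans_eq hn)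

theorem PiecewiseC1On.mono (h : PiecewiseC1On γ a b) (hac : a ≤ c) (hcd : c ≤ d) (hdb : d ≤ b) :
    PiecewiseC1On γ c d := by
  obtain ⟨n, u, hu, h0, hn, hd⟩ := h.exists_monotone
  refine ⟨h.1.mono (Icc_subset_Icc hac hdb), n, fun i => max c (min d (u i)), by grind, by grind,
    fun i _ => max_le_max_left _ (min_le_min_left _ (hu i.le_succ)), fun i hi => ?_⟩
  have hui := hu i.le_succ
  rcases lt_or_ge (max c (min d (u i))) (max c (min d (u (i + 1)))) with hlt | hge
  · exact (hd i hi).mono (Icc_subset_Icc (by grind) (by grind))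
  · intro x hx
    rw [(subsingleton_Icc_of_ge hge).eq_singleton_of_mem hx]
    exact contDiffWithinAt_singleton

theorem PiecewiseC1On.comp_lineMap (h : PiecewiseC1On γ a b) (hab : a < b) :
    PiecewiseC1On (γ ∘ AffineMap.lineMap a b) 0 1 := by
  obtain ⟨n, u, hu, h0, hn, hd⟩ := h.exists_monotone
  have hpos : 0 < b - a := sub_pos.2 hab
  have hmaps : MapsTo (AffineMap.lineMap a b) (Icc (0 : ℝ) 1) (Icc a b) :=
    (convex_Icc a b).mapsTo_lineMap (left_mem_Icc.2 hab.le) (right_mem_Icc.2 hab.le)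
  refine ⟨h.1.comp (by fun_prop) hmaps, n, fun i => (u i - a) / (b - a), by simp [h0],
    by simp [hn, hpos.ne'], fun i _ => ?_, fun i hi => ?_⟩
  · exact div_le_div_of_nonneg_right (sub_le_sub_right (hu i.le_succ) a) hpos.le
  · refine (hd i hi).comp (AffineMap.contDiff_lineMap a b).contDiffOn fun x hx => ?_
    simp only [mem_Icc, div_le_iff₀ hpos, le_div_iff₀ hpos] at hx
    rw [AffineMap.lineMap_apply_ring']
    constructor <;> linarith

theorem PiecewiseC1On.trans (hab : PiecewiseC1On γ a b) (hbc : PiecewiseC1On γ b c) :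
    PiecewiseC1On γ a c := by
  have hcont : ContinuousOn γ (Icc a c) := by
    rw [← Icc_union_Icc_eq_Icc hab.le hbc.le]
    exact hab.1.union_of_isClosed hbc.1 isClosed_Icc isClosed_Icc
  obtain ⟨-, n, u, hu0, hun, hu, hud⟩ := hab
  obtain ⟨-, m, v, hv0, hvm, hv, hvd⟩ := hbc
  have hbound : u n = v 0 := hun.trans hv0.symm
  have hcases : ∀ i < n + m, i < n ∨ ∃ k < m, i = n + k := fun i hi => by
    rcases lt_or_ge i n with h | h
    · exact .inl h
    · exact .inr ⟨i - n, by omega, by omega⟩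
  let w : ℕ → ℝ := fun i => if i ≤ n then u i else v (i - n)
  have hwu : ∀ i ≤ n, w i = u i := fun i hi => if_pos hi
  have hwv : ∀ k, w (n + k) = v k := fun k => by
    rcases k.eq_zero_or_pos with rfl | hk
    · exact (hwu n le_rfl).trans hbound
    · grind
  refine ⟨hcont, n + m, w, by rw [hwu 0 n.zero_le, hu0], by rw [hwv, hvm], fun i hi => ?_,
    fun i hi => ?_⟩ <;> rcases hcases i hi with hi | ⟨k, hk, rfl⟩
  · rw [hwu i hi.le, hwu (i + 1) hi]; exact hu i hi
  · rw [hwv, add_assoc, hwv]; exact hv k hk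
  · rw [hwu i hi.le, hwu (i + 1) hi]; exact hud i hi
  · rw [hwv, add_assoc, hwv]; exact hvd k hk

theorem PiecewiseC1On.exists_append (hγ : PiecewiseC1On γ a b) (hη : PiecewiseC1On η b c)
    (hb : γ b = η b) :
    ∃ κ, PiecewiseC1On κ a c ∧ EqOn κ γ (Icc a b) ∧ EqOn κ η (Icc b c) := by
  let κ : ℝ → ℂ := (Iic b).piecewise γ η
  have hκγ : EqOn κ γ (Icc a b) := (piecewise_eqOn _ _ _).mono Icc_subset_Iic_self
  have hκη : EqOn κ η (Icc b c) := fun t ht => by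
    rcases ht.1.eq_or_lt with rfl | hlt
    · exact (hκγ (right_mem_Icc.2 hγ.le)).trans hb
    · exact piecewise_eq_of_notMem _ _ _ (notMem_Iic.2 hlt)
  exact ⟨κ, (hγ.congr hκγ).trans (hη.congr hκη), hκγ, hκη⟩

end PiecewiseC1On

open AnalyticGerm

section ContAlong

variable {f g : ℂ → ℂ} {γ : ℝ → ℂ} {a b : ℝ} {L : ℝ → AnalyticGerm ℂ ℂ ℂ}

theorem ContAlong.exists_isLiftOn (h : ContAlong f γ a b g) (hγ : ContinuousOn γ (Icc a b)) :
    ∃ L, IsLiftOn L γ (Icc a b) ∧ L a = germAt ℂ f (γ a) := by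
  obtain ⟨F, r, hF, hcompat, hFf, -⟩ := h
  refine ⟨fun t => germAt ℂ (F t) (γ t), ⟨fun t ht => ?_, fun t _ => point_germAt _ _⟩,
    germAt_congr hFf⟩
  have hana : AnalyticAt ℂ (F t) (γ t) := (hF t ht).2 _ (mem_ball_self (hF t ht).1)
  refine ((continuousAt_germAt hana).comp_continuousWithinAt (hγ t ht)).congr_of_eventuallyEq
    ?_ rfl
  obtain ⟨ε, hε, hFε⟩ := hcompat t ht
  filter_upwards [(hγ t ht).eventually (ball_mem_nhds _ (hF t ht).1), self_mem_nhdsWithin,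
    mem_nhdsWithin_of_mem_nhds (ball_mem_nhds t hε)] with t' hball ht' hdist
  exact germAt_congr <| (hFε t' ht' hdist).symm.eventuallyEq_of_mem <|
    inter_mem (isOpen_ball.mem_nhds hball) (ball_mem_nhds _ (hF t' ht').1)

theorem AnalyticGerm.IsLiftOn.contAlong (hL : IsLiftOn L γ (Icc a b)) (hab : a ≤ b)
    (hf : AnalyticAt ℂ f (γ a)) (hLf : L a = germAt ℂ f (γ a))
    (hg : AnalyticAt ℂ g (γ b)) (hLg : L b = germAt ℂ g (γ b)) : ContAlong f γ a b g := by
  have hrep : ∀ t ∈ Icc a b, ∃ F : ℂ → ℂ, AnalyticAt ℂ F (γ t) ∧ germAt ℂ F (γ t) = L t :=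
    fun t ht => by simpa only [← hL.point_eq ht] using (L t).exists_germAt_eq
  choose! F hF hFL using hrep
  choose! r hr hFr using fun t ht => (hF t ht).exists_ball_analyticOnNhd
  have heq : ∀ t ∈ Icc a b, ∀ h : ℂ → ℂ, AnalyticAt ℂ h (γ t) → L t = germAt ℂ h (γ t) →
      ∀ᶠ z in 𝓝 (γ t), F t z = h z := fun t ht h hh hLh =>
    (germAt_eq_germAt_iff (hF t ht) hh).1 ((hFL t ht).trans hLh)
  refine ⟨F, r, fun t ht => ⟨hr t ht, hFr t ht⟩, fun t ht => ?_,
    heq a (left_mem_Icc.2 hab) f hf hLf, heq b (right_mem_Icc.2 hab) g hg hLg⟩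
  have hnear : ∀ᶠ t' in 𝓝[Icc a b] t, germAt ℂ (F t) (L t').point = L t' ∧
      (L t').point ∈ ball (γ t) (r t) := by
    refine ((hL.continuousOn t ht).eventually (hFL t ht ▸ eventually_germAt_point_eq (hF t ht))).and
      (((continuous_point.continuousAt).comp_continuousWithinAt (hL.continuousOn t ht)).eventually
        (isOpen_ball.mem_nhds ?_))
    exact (hL.point_eq ht).symm ▸ mem_ball_self (hr t ht)
  obtain ⟨ε, hε, hnear⟩ := Metric.eventually_nhds_iff.1 (eventually_nhdsWithin_iff.1 hnear)
  refine ⟨ε, hε, fun t' ht' hdist => ?_⟩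
  obtain ⟨hgerm, hball⟩ := hnear hdist ht'
  have hpt : (L t').point = γ t' := hL.point_eq ht'
  rw [hpt] at hgerm hball
  have hmem : γ t' ∈ ball (γ t) (r t) ∩ ball (γ t') (r t') := ⟨hball, mem_ball_self (hr t' ht')⟩
  exact ((hFr t ht).mono inter_subset_left).eqOn_of_preconnected_of_eventuallyEq
    ((hFr t' ht').mono inter_subset_right)
    ((convex_ball _ _).inter (convex_ball _ _)).isPreconnected hmem
    ((germAt_eq_germAt_iff (hFr t ht _ hball) (hF t' ht')).1 (hgerm.trans (hFL t' ht').symm))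

theorem contAlong_of_analyticAt (hab : a ≤ b) (hγ : ContinuousOn γ (Icc a b))
    (hg : ∀ t ∈ Icc a b, AnalyticAt ℂ g (γ t)) (hgf : g =ᶠ[𝓝 (γ a)] f) :
    ContAlong f γ a b g :=
  (isLiftOn_germAt_comp hγ hg).contAlong hab ((hg a (left_mem_Icc.2 hab)).congr hgf)
    (germAt_congr hgf) (hg b (right_mem_Icc.2 hab)) rfl

end ContAlong

theorem exists_forall_Icc_mem_of_notMem {ι X : Type*} [ConditionallyCompleteLinearOrder ι]
    [TopologicalSpace ι] [OrderTopology ι] [DenselyOrdered ι] [TopologicalSpace X] [T1Space X]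
    {γ : ι → X} {a b t : ι} {B : Set X} (hγ : ContinuousOn γ (Icc a b)) (hB : IsOpen B)
    (ha : γ a ∈ B) (ht : t ∈ Icc a b) (htB : γ t ∉ B) :
    ∃ s ∈ Ico a b, γ s ≠ γ a ∧ ∀ u ∈ Icc a s, γ u ∈ B := by
  have hcomp : IsCompact (Icc a b ∩ γ ⁻¹' Bᶜ) := isCompact_Icc.of_isClosed_subset
    (hγ.preimage_isClosed_of_isClosed isClosed_Icc hB.isClosed_compl) inter_subset_left
  obtain ⟨e, ⟨he, heB⟩, hleast⟩ := hcomp.exists_isLeast ⟨t, ht, htB⟩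
  have hea : γ e ≠ γ a := fun h => heB (h ▸ ha)
  have hae : a < e := lt_of_le_of_ne he.1 fun h => hea (h ▸ rfl)
  have hne : ∀ᶠ s in 𝓝[Ico a e] e, γ s ≠ γ a :=
    ((hγ e he).mono (Ico_subset_Icc_self.trans (Icc_subset_Icc_right he.2))).eventually
      (isOpen_compl_singleton.mem_nhds hea)
  have := right_nhdsWithin_Ico_neBot hae
  obtain ⟨s, hs, hse⟩ := (hne.and self_mem_nhdsWithin).exists
  refine ⟨s, ⟨hse.1, hse.2.trans_le he.2⟩, hs, fun u hu => by_contra fun huB => ?_⟩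
  exact (hu.2.trans_lt hse.2).not_ge (hleast ⟨⟨hu.1, hu.2.trans (hse.2.le.trans he.2)⟩, huB⟩)

namespace OmegaCont

variable {Ω : Set ℂ} {f : ℂ → ℂ} {γ : ℝ → ℂ} {a b : ℝ}

theorem compl_mem_nhdsNE (hf : OmegaCont Ω f) : Ωᶜ ∈ 𝓝[≠] 0 := by
  obtain ⟨R, hR, -, hΩ, -⟩ := hf
  exact Metric.mem_nhdsWithin_iff.2 ⟨R, hR, fun ζ hζ => hΩ ζ hζ.1 hζ.2⟩

theorem analyticAt_zero (hf : OmegaCont Ω f) : AnalyticAt ℂ f 0 := by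
  obtain ⟨R, hR, hfR, -⟩ := hf
  exact hfR 0 (mem_ball_self hR)

theorem exists_radius_isLiftOn (hf : OmegaCont Ω f) :
    ∃ R > 0, AnalyticOnNhd ℂ f (ball 0 R) ∧ ∀ (γ : ℝ → ℂ) (a b : ℝ), a < b →
      PiecewiseC1On γ a b → γ a ∈ ball 0 R → γ a ≠ 0 → (∀ t ∈ Icc a b, γ t ∉ Ω) →
        ∃ L, IsLiftOn L γ (Icc a b) ∧ L a = germAt ℂ f (γ a) := by
  obtain ⟨R, hR, hfR, -, hcont⟩ := hf
  refine ⟨R, hR, hfR, fun γ a b hab hγ hγR hγ0 hγΩ => ?_⟩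
  have hmaps : MapsTo (AffineMap.lineMap a b) (Icc (0 : ℝ) 1) (Icc a b) :=
    (convex_Icc a b).mapsTo_lineMap (left_mem_Icc.2 hab.le) (right_mem_Icc.2 hab.le)
  have hγ' := hγ.comp_lineMap hab
  obtain ⟨g, hg⟩ := hcont _ hγ' (by simpa using hγR) (by simpa using hγ0)
    fun t ht => hγΩ _ (hmaps ht)
  obtain ⟨L, hL, hL0⟩ := hg.exists_isLiftOn hγ'.1
  have hpos : 0 < b - a := sub_pos.2 hab
  have hinv : MapsTo (fun t => (t - a) / (b - a)) (Icc a b) (Icc 0 1) := fun t ht =>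
    ⟨div_nonneg (sub_nonneg.2 ht.1) hpos.le, (div_le_one hpos).2 (sub_le_sub_right ht.2 a)⟩
  refine ⟨_, (hL.comp (by fun_prop) hinv).congr_base fun t _ => ?_, by simpa using hL0⟩
  simp [AffineMap.lineMap_apply_ring', hpos.ne']

theorem exists_isLiftOn (hf : OmegaCont Ω f) (hγ : PiecewiseC1On γ a b) (ha : γ a = 0)
    (hγΩ : ∀ t ∈ Ioc a b, γ t ∉ Ω) :
    ∃ L, IsLiftOn L γ (Icc a b) ∧ L a = germAt ℂ f (γ a) := by
  obtain ⟨R, hR, hfR, hcont⟩ := hf.exists_radius_isLiftOn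
  have ha_mem : γ a ∈ ball 0 R := ha ▸ mem_ball_self hR
  by_cases hγR : ∀ t ∈ Icc a b, γ t ∈ ball 0 R
  · exact ⟨_, isLiftOn_germAt_comp hγ.1 fun t ht => hfR _ (hγR t ht), rfl⟩
  push Not at hγR
  obtain ⟨t, ht, htR⟩ := hγR
  obtain ⟨s, hs, hs0, hsR⟩ := exists_forall_Icc_mem_of_notMem hγ.1 isOpen_ball ha_mem ht htR
  rw [ha] at hs0
  have has : a < s := lt_of_le_of_ne hs.1 fun h => hs0 (h ▸ ha)
  obtain ⟨M, hM, hMs⟩ := hcont γ s b hs.2 (hγ.mono hs.1 hs.2.le le_rfl)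
    (hsR s (right_mem_Icc.2 hs.1)) hs0 fun u hu => hγΩ u ⟨has.trans_le hu.1, hu.2⟩
  have hgerm : IsLiftOn (fun u => germAt ℂ f (γ u)) γ (Icc a s) :=
    isLiftOn_germAt_comp (hγ.1.mono (Icc_subset_Icc_right hs.2.le)) fun u hu => hfR _ (hsR u hu)
  obtain ⟨N, hN, hNgerm, -⟩ := hgerm.exists_Icc_trans hM hs.1 hs.2.le hMs.symm
  exact ⟨N, hN, hNgerm (left_mem_Icc.2 hs.1)⟩

theorem exists_lineMap_isLiftOn (hf : OmegaCont Ω f) (hγ : PiecewiseC1On γ a b) (ha : γ a = 0)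
    (hγΩ : ∀ t ∈ Ioc a b, γ t ∉ Ω) {L : ℝ → AnalyticGerm ℂ ℂ ℂ} (hL : IsLiftOn L γ (Icc a b))
    (hLa : L a = germAt ℂ f (γ a)) {z : ℂ}
    (hz : ∀ u ∈ Ioc (0 : ℝ) 1, AffineMap.lineMap (γ b) z u ∉ Ω) :
    ∃ M, IsLiftOn M (AffineMap.lineMap (γ b) z) (Icc (0 : ℝ) 1) ∧ M 0 = L b := by
  -- The continuation along `γ` followed by the segment extends `L`, by uniqueness of lifts.
  have hsegment : PiecewiseC1On (fun u => AffineMap.lineMap (γ b) z (u - b)) b (b + 1) :=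
    piecewiseC1On_of_contDiffOn (by linarith) (by fun_prop)
  obtain ⟨η, hη, hηγ, hηz⟩ := hγ.exists_append hsegment (by simp)
  have ha_mem : a ∈ Icc a b := left_mem_Icc.2 hγ.le
  have hηΩ : ∀ u ∈ Ioc a (b + 1), η u ∉ Ω := fun u hu => by
    rcases le_or_gt u b with hub | hub
    · rw [hηγ ⟨hu.1.le, hub⟩]; exact hγΩ u ⟨hu.1, hub⟩
    · rw [hηz ⟨hub.le, hu.2⟩]; exact hz _ ⟨sub_pos.2 hub, sub_le_iff_le_add'.2 hu.2⟩
  obtain ⟨N, hN, hNa⟩ := hf.exists_isLiftOn hη ((hηγ ha_mem).trans ha) hηΩ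
  have hNγ : IsLiftOn N γ (Icc a b) :=
    (hN.mono (Icc_subset_Icc_right (by linarith))).congr_base hηγ
  have hNL : EqOn N L (Icc a b) :=
    hNγ.eqOn_of_isPreconnected hL isPreconnected_Icc ha_mem (by rw [hNa, hLa, hηγ ha_mem])
  have hshift : MapsTo (fun u => b + u) (Icc (0 : ℝ) 1) (Icc b (b + 1)) := fun u hu =>
    ⟨le_add_of_nonneg_right hu.1, add_le_add_right hu.2 b⟩
  have hNz : IsLiftOn N (fun u => AffineMap.lineMap (γ b) z (u - b)) (Icc b (b + 1)) :=
    (hN.mono (Icc_subset_Icc_left hγ.le)).congr_base hηz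
  exact ⟨N ∘ (b + ·), (hNz.comp (by fun_prop) hshift).congr_base fun u _ => by simp,
    by simpa using hNL (right_mem_Icc.2 hγ.le)⟩

theorem exists_contAlong_analyticOnNhd (hf : OmegaCont Ω f) (hγ : PiecewiseC1On γ a b)
    (ha : γ a = 0) (hγΩ : ∀ t ∈ Ioc a b, γ t ∉ Ω) {U : Set ℂ} (hU : IsOpen U) (hb : γ b ∈ U)
    (hstar : StarConvex ℝ (γ b) U) (hUΩ : Disjoint (U \ {γ b}) Ω) :
    ∃ g, ContAlong f γ a b g ∧ AnalyticOnNhd ℂ g U := by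
  obtain ⟨L, hL, hLa⟩ := hf.exists_isLiftOn hγ ha hγΩ
  have hsegment : ∀ z ∈ U, z ≠ γ b → ∀ u ∈ Ioc (0 : ℝ) 1, AffineMap.lineMap (γ b) z u ∉ Ω :=
    fun z hz hzb u hu => Set.disjoint_left.1 hUΩ ⟨hstar.segment_subset hz
      (lineMap_mem_segment ℝ _ _ (Ioc_subset_Icc_self hu)),
      by simp [AffineMap.lineMap_eq_left_iff, hzb.symm, hu.1.ne']⟩
  obtain ⟨g, hg, hgL⟩ := exists_analyticOnNhd_of_forall_lineMap hU hb
    (hL.point_eq (right_mem_Icc.2 hγ.le)) fun z hz hzb =>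
      hf.exists_lineMap_isLiftOn hγ ha hγΩ hL hLa (hsegment z hz hzb)
  exact ⟨g, hL.contAlong hγ.le (ha ▸ hf.analyticAt_zero) hLa (hg _ hb) hgL.symm, hg⟩

theorem exists_analyticOnNhd_eventuallyEq (hf : OmegaCont Ω f) {U : Set ℂ} (hU : IsOpen U)
    (h0 : 0 ∈ U) (hstar : StarConvex ℝ 0 U) (hUΩ : Disjoint (U \ {0}) Ω) :
    ∃ g, AnalyticOnNhd ℂ g U ∧ g =ᶠ[𝓝 0] f := by
  obtain ⟨g, ⟨F, -, -, -, hFf, hFg⟩, hg⟩ := hf.exists_contAlong_analyticOnNhd (a := 0) (b := 0)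
    (piecewiseC1On_of_contDiffOn le_rfl contDiffOn_const) rfl (by simp) hU h0 hstar hUΩ
  exact ⟨g, hg, EventuallyEq.trans (EventuallyEq.symm hFg) hFf⟩

theorem exists_contAlong_of_mapsTo (hf : OmegaCont Ω f) (hab : a ≤ b)
    (hγ : ContinuousOn γ (Icc a b)) (ha : γ a = 0) {U : Set ℂ} (hγU : MapsTo γ (Icc a b) U)
    (hU : IsOpen U) (hstar : StarConvex ℝ 0 U) (hUΩ : Disjoint (U \ {0}) Ω) :
    ∃ g, ContAlong f γ a b g ∧ AnalyticOnNhd ℂ g U := by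
  obtain ⟨g, hg, hgf⟩ := hf.exists_analyticOnNhd_eventuallyEq hU
    (ha ▸ hγU (left_mem_Icc.2 hab)) hstar hUΩ
  exact ⟨g, contAlong_of_analyticAt hab hγ (fun t ht => hg _ (hγU ht)) (ha ▸ hgf), hg⟩

end OmegaCont

theorem exists_pos_forall_mem_of_continuousOn {T X : Type*} [TopologicalSpace T]
    [TopologicalSpace X] {H : ℝ → T → X} {K : Set T} {b : ℝ} {U : Set X} (hK : IsCompact K)
    (hH : ContinuousOn (fun p : ℝ × T => H p.1 p.2) (Icc 0 b ×ˢ K)) (hb : 0 ≤ b) (hU : IsOpen U)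
    (h0 : ∀ t ∈ K, H 0 t ∈ U) : ∃ d > 0, ∀ s ∈ Icc 0 b, s < d → ∀ t ∈ K, H s t ∈ U := by
  have hnear : ∀ᶠ s in 𝓝 (0 : ℝ), ∀ t ∈ K, s ∈ Icc 0 b → t ∈ K → H s t ∈ U :=
    hK.eventually_forall_of_forall_eventually fun t ht => by
      have h0t : (0, t) ∈ Icc 0 b ×ˢ K := ⟨left_mem_Icc.2 hb, ht⟩
      filter_upwards [eventually_nhdsWithin_iff.1 ((hH _ h0t).eventually (hU.mem_nhds (h0 t ht)))]
        with p hp hs ht using hp ⟨hs, ht⟩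
  obtain ⟨d, hd, hball⟩ := Metric.eventually_nhds_iff.1 hnear
  refine ⟨d, hd, fun s hs hsd t ht => hball ?_ t ht hs ht⟩
  rwa [Real.dist_eq, sub_zero, abs_of_nonneg hs.1]

theorem exists_pos_forall_disjoint_ball {X Y : Type*} [TopologicalSpace X] [PseudoMetricSpace Y]
    {F : X → Y} {K : Set X} {Ω : Set Y} (hK : IsCompact K) (hF : ContinuousOn F K)
    (hΩ : IsClosed Ω) (h : ∀ x ∈ K, F x ∉ Ω) : ∃ δ > 0, ∀ x ∈ K, Disjoint (ball (F x) δ) Ω := by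
  obtain ⟨δ, hδ, hsub⟩ := (hK.image_of_continuousOn hF).exists_thickening_subset_open
    hΩ.isOpen_compl (image_subset_iff.2 h)
  exact ⟨δ, hδ, fun x hx => disjoint_left.2 fun y hy =>
    hsub (ball_subset_thickening (mem_image_of_mem F hx) δ hy)⟩

theorem stmt6_general {T : Type*} [TopologicalSpace T] {Ω : Set ℂ} (hΩ : IsClosed Ω) {K : Set T}
    (hK : IsCompact K) {H : ℝ → T → ℂ}
    (hH : ContinuousOn (fun p : ℝ × T => H p.1 p.2) (Icc 0 1 ×ˢ K))
    (hC1 : ∀ t ∈ K, PiecewiseC1On (fun s => H s t) 0 1) (hH0 : ∀ t ∈ K, H 0 t = 0)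
    (hHΩ : ∀ t ∈ K, ∀ s ∈ Ioc (0 : ℝ) 1, H s t ∉ Ω) :
    ∃ δ > 0, ∀ f : ℂ → ℂ, OmegaCont Ω f → ∀ s ∈ Icc (0 : ℝ) 1, ∀ t ∈ K,
      ∃ g : ℂ → ℂ, ContAlong f (fun u => H u t) 0 s g ∧ AnalyticOnNhd ℂ g (ball (H s t) δ) := by
  by_cases h0 : Ωᶜ ∈ 𝓝[≠] 0
  swap
  · exact ⟨1, one_pos, fun f hf => absurd hf.compl_mem_nhdsNE h0⟩
  obtain ⟨ρ, hρ, hρΩ⟩ := Metric.mem_nhdsWithin_iff.1 h0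
  obtain ⟨d, hd, hsmall⟩ := exists_pos_forall_mem_of_continuousOn hK hH zero_le_one
    (isOpen_ball (x := 0) (ε := ρ / 2)) fun t ht => hH0 t ht ▸ mem_ball_self (half_pos hρ)
  obtain ⟨δ, hδ, hlarge⟩ := exists_pos_forall_disjoint_ball (isCompact_Icc.prod hK)
    (hH.mono (prod_mono_left (Icc_subset_Icc_left hd.le))) hΩ
    fun p hp => hHΩ p.2 hp.2 p.1 ⟨hd.trans_le hp.1.1, hp.1.2⟩
  refine ⟨min δ (ρ / 2), by positivity, fun f hf s hs t ht => ?_⟩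
  have hC1s : PiecewiseC1On (fun u => H u t) 0 s := (hC1 t ht).mono le_rfl hs.1 hs.2
  rcases lt_or_ge s d with hsd | hsd
  · have hmaps : MapsTo (fun u => H u t) (Icc 0 s) (ball 0 (ρ / 2)) := fun u hu =>
      hsmall u ⟨hu.1, hu.2.trans hs.2⟩ (hu.2.trans_lt hsd) t ht
    obtain ⟨g, hg, hgρ⟩ := hf.exists_contAlong_of_mapsTo hs.1 hC1s.1 (hH0 t ht)
      (hmaps.mono_right (ball_subset_ball (half_le_self hρ.le))) isOpen_ball
      ((convex_ball 0 ρ).starConvex (mem_ball_self hρ)) (subset_compl_iff_disjoint_right.1 hρΩ)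
    refine ⟨g, hg, hgρ.mono (ball_subset_ball' ?_)⟩
    linarith [min_le_right δ (ρ / 2), mem_ball.1 (hmaps (right_mem_Icc.2 hs.1))]
  · obtain ⟨g, hg, hgδ⟩ := hf.exists_contAlong_analyticOnNhd hC1s (hH0 t ht)
      (fun u hu => hHΩ t ht u ⟨hu.1, hu.2.trans hs.2⟩) isOpen_ball (mem_ball_self hδ)
      ((convex_ball _ δ).starConvex (mem_ball_self hδ))
      ((hlarge (s, t) ⟨⟨hsd, hs.2⟩, ht⟩).mono_left sdiff_subset)
    exact ⟨g, hg, hgδ.mono (ball_subset_ball (min_le_left _ _))⟩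

/-- For a symmetric `Ω`-homotopy `H` on `[0,1] × [a,b]`, there is a `δ > 0` such
that for every `Ω`-continuable germ `f` and every `(s,t)`, the germ of `f`
continued along the truncated path `H_{t|s}` has radius of convergence `≥ δ`. -/
theorem stmt6 (Ω : Set ℂ) (hne : Ω.Nonempty) (hcl : IsClosed Ω)
    (hdisc : DiscreteTopology Ω)
    (a b : ℝ) (hab : a ≤ b) (H : ℝ → ℝ → ℂ)
    (hH : SymmOmegaHomotopy Ω H a b) :
    ∃ δ > 0, ∀ f : ℂ → ℂ, OmegaCont Ω f →
      ∀ s ∈ Set.Icc (0:ℝ) 1, ∀ t ∈ Set.Icc a b,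
        ∃ g : ℂ → ℂ, ContAlong f (fun u => H u t) 0 s g ∧
          AnalyticOnNhd ℂ g (Metric.ball (H s t) δ) :=
  stmt6_general hcl isCompact_Icc hH.1 (fun t ht => (hH.2 t ht).1) (fun t ht => (hH.2 t ht).2.1)
    fun t ht => (hH.2 t ht).2.2.1
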